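/- Kirchhoff's effective-resistance formula: Let G=(V,E) be a finite connected simple graph, give every edge unit conductance, and let e = {x,y} ∈ E. Then the number of spanning trees of G containing e equals R_eff(x ↔ y) times the total number of spanning trees of G; equivalently, if T is a uniformly random spanning tree of G then P(e ∈ T) = R_eff(x ↔ y). -/

import Mathlib

/-!
Kirchhoff's effective-resistance formula.

All edges of the finite connected simple graph `G` have unit conductance.  A
flow is modelled as an antisymmetric function `θ : V → V → ℝ` vanishing on
non-adjacent pairs; since it vanishes off edges, sums over all vertices agree
with sums over neighbours, and `(1/2) * ∑ u, ∑ v, θ u v ^ 2` equals the sum of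
`θ(e)²` over undirected edges (the energy of `θ`).  The effective resistance
`R_eff(x ↔ y)` is the infimum of the energies of unit-strength flows from `x`
to `y`.  A spanning tree is a subset `T` of the edge set such that the graph
with edge set `T` is connected and acyclic.
-/

open Finset

variable {V : Type} [Fintype V] [DecidableEq V]

/-- `θ` is a flow of strength 1 from `a` to `z` in `G` (unit conductances). -/
def IsUnitFlow (G : SimpleGraph V) (a z : V) (θ : V → V → ℝ) : Prop :=
  (∀ x y, θ x y = -θ y x) ∧
  (∀ x y, ¬G.Adj x y → θ x y = 0) ∧
  (∀ x, x ≠ a → x ≠ z → ∑ y, θ x y = 0) ∧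
  (∑ y, θ a y = 1)

/-- The energy of a flow: the sum of `θ(e)²` over undirected edges. -/
noncomputable def flowEnergy (θ : V → V → ℝ) : ℝ :=
  (1 / 2) * ∑ u, ∑ v, θ u v ^ 2

/-- Effective resistance between `a` and `z` (unit conductances). -/
noncomputable def effRes (G : SimpleGraph V) (a z : V) : ℝ :=
  sInf {E : ℝ | ∃ θ : V → V → ℝ, IsUnitFlow G a z θ ∧ E = flowEnergy θ}

/-- `T` is (the edge set of) a spanning tree of `G`. -/
def IsSpanningTree (G : SimpleGraph V) (T : Finset (Sym2 V)) : Prop :=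
  (T : Set (Sym2 V)) ⊆ G.edgeSet ∧ (SimpleGraph.fromEdgeSet (T : Set (Sym2 V))).IsTree

/-!
By Thomson's principle, if a potential `φ` has Laplacian `δ_x - δ_y`, then `R_eff(x ↔ y)` is
`φ x - φ y`. Such a potential comes from counting: let `h_xy u` be the number of two-component
spanning forests separating `x` from `y` with `u` on the side of `x`. Sorting forests by the
positions of all four vertices gives the reciprocity `h_xy u - h_xy v = h_vu y - h_vu x`, so the
Laplacian of `h_xy` at `u` is the difference of the sums of `h_vu y` and of `h_vu x` over the
neighbours `v` of `u`. For an edge `uv`, adding it to a forest shows that `h_vu w` counts the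
spanning trees whose path from `u` to `w` starts with `uv`; summing over `v`, every spanning tree
is counted exactly once if `w ≠ u`, and never if `w = u`. Hence the Laplacian of `h_xy` is the
number of spanning trees times `δ_x - δ_y`, while `h_xy x - h_xy y` is the number of forests
separating `x` from `y`. When `xy` is an edge, these correspond to the spanning trees containing it.
-/

open SimpleGraph Matrix

section UnitFlow

variable {W : Type} [Fintype W]

lemma sum_sum_sub_mul_of_antisymm {ι R : Type*} [Fintype ι] [CommRing R] {θ : ι → ι → R}
    (hθ : ∀ u v, θ u v = -θ v u) (φ : ι → R) :
    ∑ u, ∑ v, (φ u - φ v) * θ u v = 2 * ∑ u, φ u * ∑ v, θ u v := by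
  calc ∑ u, ∑ v, (φ u - φ v) * θ u v
      = ∑ u, ∑ v, φ u * θ u v + ∑ u, ∑ v, φ v * θ v u := by
        simp only [← sum_add_distrib]
        refine sum_congr rfl fun u _ => sum_congr rfl fun v _ => ?_
        rw [hθ v u]
        ring
    _ = 2 * ∑ u, φ u * ∑ v, θ u v := by
        rw [sum_comm (f := fun u v => φ v * θ v u)]
        simp only [mul_sum, two_mul, sum_add_distrib]

lemma lapMatrix_mulVec_apply_eq_sum_sub {α R : Type*} [Fintype α] [DecidableEq α]
    [NonAssocRing R] (G : SimpleGraph α) [DecidableRel G.Adj] (φ : α → R) (u : α) :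
    (G.lapMatrix R *ᵥ φ) u = ∑ v ∈ G.neighborFinset u, (φ u - φ v) := by
  rw [lapMatrix_mulVec_apply, sum_sub_distrib, sum_const, card_neighborFinset_eq_degree,
    nsmul_eq_mul]

lemma flowEnergy_nonneg (θ : W → W → ℝ) : 0 ≤ flowEnergy θ := by
  unfold flowEnergy
  positivity

lemma flowEnergy_sub (θ η : W → W → ℝ) :
    flowEnergy (θ - η) = flowEnergy θ - ∑ u, ∑ v, η u v * θ u v + flowEnergy η := by
  simp only [flowEnergy, mul_sum, ← sum_sub_distrib, ← sum_add_distrib, Pi.sub_apply]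
  exact sum_congr rfl fun u _ => sum_congr rfl fun v _ => by ring

namespace IsUnitFlow

variable {G : SimpleGraph W} {a z : W} {θ : W → W → ℝ}

lemma sum_sum_eq_zero (hθ : IsUnitFlow G a z θ) : ∑ u, ∑ v, θ u v = 0 := by
  simpa using sum_sum_sub_mul_of_antisymm hθ.1 1

lemma ne (hθ : IsUnitFlow G a z θ) : a ≠ z := by
  rintro rfl
  have htotal := hθ.sum_sum_eq_zero
  obtain ⟨-, -, hnode, hsource⟩ := hθ
  rw [Fintype.sum_eq_single a fun u hu => hnode u hu hu, hsource] at htotal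
  exact one_ne_zero htotal

lemma sum_eq [DecidableEq W] (hθ : IsUnitFlow G a z θ) (u : W) :
    ∑ v, θ u v = (Pi.single a 1 - Pi.single z 1 : W → ℝ) u := by
  have haz := hθ.ne
  have htotal := hθ.sum_sum_eq_zero
  obtain ⟨-, -, hnode, hsource⟩ := hθ
  rw [Fintype.sum_eq_add a z haz fun u hu => hnode u hu.1 hu.2, hsource] at htotal
  by_cases hua : u = a
  · subst hua
    simp [hsource, haz]
  by_cases huz : u = z
  · subst huz
    simp [hua, eq_neg_of_add_eq_zero_right htotal]
  · simp [hua, huz, hnode u hua huz]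

end IsUnitFlow

/-- The current induced by a potential `φ` on a network with unit conductances (Ohm's law). -/
def potentialFlow (G : SimpleGraph W) [DecidableRel G.Adj] (φ : W → ℝ) (u v : W) : ℝ :=
  if G.Adj u v then φ u - φ v else 0

variable {G : SimpleGraph W} [DecidableRel G.Adj] {a z : W} {φ : W → ℝ}

lemma IsUnitFlow.sum_sum_potentialFlow_mul {θ : W → W → ℝ} (hθ : IsUnitFlow G a z θ)
    (φ : W → ℝ) : ∑ u, ∑ v, potentialFlow G φ u v * θ u v = 2 * (φ a - φ z) := by
  classical
  have hedge (u v : W) : potentialFlow G φ u v * θ u v = (φ u - φ v) * θ u v := by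
    by_cases huv : G.Adj u v
    · rw [potentialFlow, if_pos huv]
    · rw [hθ.2.1 u v huv, mul_zero, mul_zero]
  simp only [hedge, sum_sum_sub_mul_of_antisymm hθ.1, hθ.sum_eq, Pi.sub_apply, mul_sub,
    sum_sub_distrib]
  simp [Pi.single_apply]

variable [DecidableEq W]

lemma sum_potentialFlow_eq_lapMatrix_mulVec (φ : W → ℝ) (u : W) :
    ∑ v, potentialFlow G φ u v = (G.lapMatrix ℝ *ᵥ φ) u := by
  simp only [lapMatrix_mulVec_apply_eq_sum_sub, potentialFlow, ← sum_filter,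
    neighborFinset_eq_filter]

lemma isUnitFlow_potentialFlow (haz : a ≠ z)
    (hφ : G.lapMatrix ℝ *ᵥ φ = Pi.single a 1 - Pi.single z 1) :
    IsUnitFlow G a z (potentialFlow G φ) := by
  refine ⟨fun u v => ?_, fun u v huv => if_neg huv, fun u hua huz => ?_, ?_⟩
  · simp only [potentialFlow, G.adj_comm v u]
    split_ifs <;> ring
  · simp [sum_potentialFlow_eq_lapMatrix_mulVec, hφ, hua, huz]
  · simp [sum_potentialFlow_eq_lapMatrix_mulVec, hφ, haz]

/-- Thomson's principle: the current induced by `φ` is orthogonal to every flow without sources,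
hence minimizes the energy among unit flows. -/
lemma effRes_eq_sub_of_lapMatrix_mulVec (haz : a ≠ z)
    (hφ : G.lapMatrix ℝ *ᵥ φ = Pi.single a 1 - Pi.single z 1) :
    effRes G a z = φ a - φ z := by
  have hflow := isUnitFlow_potentialFlow haz hφ
  have henergy : flowEnergy (potentialFlow G φ) = φ a - φ z := by
    simp only [flowEnergy, sq, hflow.sum_sum_potentialFlow_mul]
    ring
  refine IsLeast.csInf_eq ⟨⟨_, hflow, henergy.symm⟩, ?_⟩
  rintro _ ⟨θ, hθ, rfl⟩
  have hnonneg := flowEnergy_nonneg (θ - potentialFlow G φ)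
  rw [flowEnergy_sub, hθ.sum_sum_potentialFlow_mul, henergy] at hnonneg
  linarith

end UnitFlow

section DeleteEdge

variable {α : Type*} {H : SimpleGraph α} {u v w : α}

lemma reachable_deleteEdges_left_or_right (v : α) (huw : H.Reachable u w) :
    (H.deleteEdges {s(u, v)}).Reachable u w ∨ (H.deleteEdges {s(u, v)}).Reachable v w := by
  obtain ⟨p, hp⟩ := huw.exists_isPath
  cases p with
  | nil => exact .inl .rfl
  | @cons _ b _ hub q =>
    rw [Walk.cons_isPath_iff] at hp
    have hq : s(u, v) ∉ q.edges := fun h => hp.2 (q.fst_mem_support_of_mem_edges h)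
    by_cases hbv : b = v
    · subst hbv
      exact .inr (q.toDeleteEdge _ hq).reachable
    · refine .inl ((q.cons hub).toDeleteEdge _ ?_).reachable
      simp [hq, Ne.symm hbv, hub.ne]

lemma existsUnique_adj_reachable_deleteEdges (hH : H.IsTree) (hwu : w ≠ u) :
    ∃! v, H.Adj u v ∧ (H.deleteEdges {s(u, v)}).Reachable v w := by
  obtain ⟨p, hp⟩ := (hH.connected u w).exists_isPath
  cases p with
  | nil => exact absurd rfl hwu
  | @cons _ b _ hub q =>
    rw [Walk.cons_isPath_iff] at hp
    have hq (v : α) : s(u, v) ∉ q.edges := fun h => hp.2 (q.fst_mem_support_of_mem_edges h)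
    refine ⟨b, ⟨hub, (q.toDeleteEdge _ (hq b)).reachable⟩, fun v ⟨huv, hvw⟩ => ?_⟩
    by_contra hvb
    have huw : (H.deleteEdges {s(u, v)}).Reachable u w :=
      ((q.cons hub).toDeleteEdge _ (by simp [hq, hvb, hub.ne])).reachable
    have hbridge := isBridge_iff.mp (isAcyclic_iff_forall_adj_isBridge.mp hH.isAcyclic huv)
    exact hbridge (huw.trans hvw.symm)

end DeleteEdge

section SpanningForest

/-- The graph on `α` with edge set `F`. -/
abbrev edgeGraph {α : Type*} (F : Finset (Sym2 α)) : SimpleGraph α :=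
  fromEdgeSet (F : Set (Sym2 α))

lemma edgeGraph_insert {α : Type*} [DecidableEq α] (F : Finset (Sym2 α)) (u v : α) :
    edgeGraph (insert s(u, v) F) = edgeGraph F ⊔ edge u v := by
  rw [edgeGraph, coe_insert, Set.insert_eq, Set.union_comm, fromEdgeSet_union, edge]

lemma edgeGraph_erase {α : Type*} [DecidableEq α] (F : Finset (Sym2 α)) (e : Sym2 α) :
    edgeGraph (F.erase e) = (edgeGraph F).deleteEdges {e} := by
  rw [edgeGraph, deleteEdges_fromEdgeSet, coe_erase]

/-- `F` is (the edge set of) a spanning forest of `G` with exactly two components, one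
containing `x` and the other containing `y`. -/
structure IsSeparatingForest {α : Type*} (G : SimpleGraph α) (x y : α) (F : Finset (Sym2 α)) :
    Prop where
  subset_edgeSet : (F : Set (Sym2 α)) ⊆ G.edgeSet
  isAcyclic : (edgeGraph F).IsAcyclic
  not_reachable : ¬(edgeGraph F).Reachable x y
  reachable_or (w : α) : (edgeGraph F).Reachable x w ∨ (edgeGraph F).Reachable y w

namespace IsSeparatingForest

variable {α : Type*} {G : SimpleGraph α} {x y u v w : α} {F : Finset (Sym2 α)}

lemma symm (hF : IsSeparatingForest G x y F) : IsSeparatingForest G y x F :=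
  ⟨hF.subset_edgeSet, hF.isAcyclic, fun h => hF.not_reachable h.symm,
    fun w => (hF.reachable_or w).symm⟩

lemma of_reachable (hF : IsSeparatingForest G x y F) (hxu : (edgeGraph F).Reachable x u)
    (hyv : (edgeGraph F).Reachable y v) : IsSeparatingForest G u v F :=
  ⟨hF.subset_edgeSet, hF.isAcyclic,
    fun huv => hF.not_reachable (hxu.trans (huv.trans hyv.symm)),
    fun w => (hF.reachable_or w).imp hxu.symm.trans hyv.symm.trans⟩

lemma not_reachable_left_iff (hF : IsSeparatingForest G x y F) :
    ¬(edgeGraph F).Reachable x w ↔ (edgeGraph F).Reachable y w :=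
  ⟨(hF.reachable_or w).resolve_left, fun hyw hxw => hF.not_reachable (hxw.trans hyw.symm)⟩

lemma notMem (hF : IsSeparatingForest G u v F) : s(u, v) ∉ F := fun h =>
  hF.not_reachable
    ((fromEdgeSet_adj _).mpr ⟨h, (hF.subset_edgeSet h : G.Adj u v).ne⟩).reachable

end IsSeparatingForest

variable {W : Type} [DecidableEq W] {G : SimpleGraph W} {u v : W}

lemma IsSeparatingForest.isSpanningTree_insert {F : Finset (Sym2 W)} (huv : G.Adj u v)
    (hF : IsSeparatingForest G u v F) : IsSpanningTree G (insert s(u, v) F) := by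
  have hle : edgeGraph F ≤ edgeGraph (insert s(u, v) F) := by
    rw [edgeGraph_insert]
    exact le_sup_left
  have hadj : (edgeGraph (insert s(u, v) F)).Adj u v :=
    (fromEdgeSet_adj _).mpr ⟨mem_insert_self _ _, huv.ne⟩
  have hreach (w : W) : (edgeGraph (insert s(u, v) F)).Reachable u w :=
    (hF.reachable_or w).elim (·.mono hle) fun h => hadj.reachable.trans (h.mono hle)
  refine ⟨?_, (connected_iff_exists_forall_reachable _).mpr ⟨u, hreach⟩, ?_⟩
  · rw [coe_insert]
    exact Set.insert_subset huv hF.subset_edgeSet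
  · rw [← edgeGraph, edgeGraph_insert]
    exact hF.isAcyclic.sup_edge_of_not_reachable hF.not_reachable

lemma IsSpanningTree.isSeparatingForest_erase {T : Finset (Sym2 W)} (hT : IsSpanningTree G T)
    (huv : s(u, v) ∈ T) : IsSeparatingForest G u v (T.erase s(u, v)) := by
  have hadj : (edgeGraph T).Adj u v :=
    (fromEdgeSet_adj _).mpr ⟨huv, (hT.1 huv : G.Adj u v).ne⟩
  refine ⟨(coe_subset.mpr (erase_subset _ _)).trans hT.1, ?_, ?_, fun w => ?_⟩ <;>
    rw [edgeGraph_erase]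
  · exact hT.2.isAcyclic.anti (deleteEdges_le _)
  · exact isBridge_iff.mp (isAcyclic_iff_forall_adj_isBridge.mp hT.2.isAcyclic hadj)
  · exact reachable_deleteEdges_left_or_right v (hT.2.connected u w)

end SpanningForest

section Counting

variable {W : Type} [Fintype W]

open scoped Classical in
/-- The edge sets of the spanning trees of `G`. -/
noncomputable def spanningTrees (G : SimpleGraph W) : Finset (Finset (Sym2 W)) :=
  {T | IsSpanningTree G T}

open scoped Classical in
/-- The edge sets of the two-component spanning forests of `G` separating `x` from `y`. -/
noncomputable def separatingForests (G : SimpleGraph W) (x y : W) : Finset (Finset (Sym2 W)) :=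
  {F | IsSeparatingForest G x y F}

open scoped Classical in
/-- The number of forests separating `x` from `y` in which `u` lies on the side of `x`. Up to
normalization, this is the electric potential of the unit current from `x` to `y`. -/
noncomputable def forestPotential (G : SimpleGraph W) (x y u : W) : ℝ :=
  #{F ∈ separatingForests G x y | (edgeGraph F).Reachable x u}

variable {G : SimpleGraph W} {u v : W}

lemma mem_spanningTrees {T : Finset (Sym2 W)} : T ∈ spanningTrees G ↔ IsSpanningTree G T := by
  simp [spanningTrees]

lemma mem_separatingForests {F : Finset (Sym2 W)} :
    F ∈ separatingForests G u v ↔ IsSeparatingForest G u v F := by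
  simp [separatingForests]

lemma spanningTrees_nonempty (hG : G.Connected) : (spanningTrees G).Nonempty := by
  classical
  obtain ⟨T, hTG, hT⟩ := hG.exists_isTree_le
  refine ⟨T.edgeFinset, mem_spanningTrees.mpr ⟨?_, ?_⟩⟩ <;> rw [coe_edgeFinset]
  · exact edgeSet_mono hTG
  · rwa [fromEdgeSet_edgeSet]

lemma card_filter_separatingForests [DecidableEq W] (huv : G.Adj u v) (P : Finset (Sym2 W) → Prop)
    [DecidablePred P] :
    #{F ∈ separatingForests G u v | P F} =
      #{T ∈ spanningTrees G | s(u, v) ∈ T ∧ P (T.erase s(u, v))} := by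
  refine card_nbij' (insert s(u, v)) (erase · s(u, v)) ?_ ?_ ?_ ?_ <;> intro F hF <;>
    simp only [coe_filter, Set.mem_ofPred_eq, mem_separatingForests, mem_spanningTrees] at hF ⊢
  · rw [erase_insert hF.1.notMem]
    exact ⟨hF.1.isSpanningTree_insert huv, mem_insert_self _ _, hF.2⟩
  · exact ⟨hF.1.isSeparatingForest_erase hF.2.1, hF.2.2⟩
  · exact erase_insert hF.1.notMem
  · exact insert_erase hF.2.1

lemma card_separatingForests [DecidableEq W] (huv : G.Adj u v) :
    #(separatingForests G u v) = #{T ∈ spanningTrees G | s(u, v) ∈ T} := by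
  simpa using card_filter_separatingForests huv fun _ => True

lemma forestPotential_left (G : SimpleGraph W) (x y : W) :
    forestPotential G x y x = #(separatingForests G x y) := by
  simp [forestPotential]

lemma forestPotential_right (G : SimpleGraph W) (x y : W) : forestPotential G x y y = 0 := by
  classical
  rw [forestPotential, Nat.cast_eq_zero, card_eq_zero, filter_eq_empty_iff]
  exact fun F hF => (mem_separatingForests.mp hF).not_reachable

open scoped Classical in
lemma forestPotential_sub (G : SimpleGraph W) (x y u v : W) :
    forestPotential G x y u - forestPotential G x y v =
      (#{F ∈ separatingForests G x y |
          (edgeGraph F).Reachable x u ∧ (edgeGraph F).Reachable y v} : ℝ) -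
        #{F ∈ separatingForests G x y |
          (edgeGraph F).Reachable x v ∧ (edgeGraph F).Reachable y u} := by
  have hsplit (s t : W) : forestPotential G x y s =
      (#{F ∈ separatingForests G x y |
          (edgeGraph F).Reachable x s ∧ (edgeGraph F).Reachable x t} : ℝ) +
        #{F ∈ separatingForests G x y |
          (edgeGraph F).Reachable x s ∧ (edgeGraph F).Reachable y t} := by
    rw [forestPotential, ← card_filter_add_card_filter_not fun F => (edgeGraph F).Reachable x t,
      filter_filter, filter_filter, Nat.cast_add]
    congr 3
    refine filter_congr fun F hF => and_congr_right fun _ => ?_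
    exact (mem_separatingForests.mp hF).not_reachable_left_iff
  rw [hsplit u v, hsplit v u]
  simp only [and_comm, add_sub_add_left_eq_sub]

open scoped Classical in
lemma filter_separatingForests_comm (G : SimpleGraph W) (x y u v : W) :
    {F ∈ separatingForests G x y |
        (edgeGraph F).Reachable x u ∧ (edgeGraph F).Reachable y v} =
      {F ∈ separatingForests G u v |
        (edgeGraph F).Reachable u x ∧ (edgeGraph F).Reachable v y} := by
  ext F
  simp only [mem_filter, mem_separatingForests]
  exact ⟨fun ⟨hF, hu, hv⟩ => ⟨hF.of_reachable hu hv, hu.symm, hv.symm⟩,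
    fun ⟨hF, hx, hy⟩ => ⟨hF.of_reachable hx hy, hx.symm, hy.symm⟩⟩

lemma separatingForests_comm (G : SimpleGraph W) (x y : W) :
    separatingForests G x y = separatingForests G y x := by
  ext F
  simp only [mem_separatingForests]
  exact ⟨.symm, .symm⟩

/-- Reciprocity: both sides are the number of two-component forests separating `{x, u}` from
`{y, v}`, minus the number of those separating `{x, v}` from `{y, u}`. -/
lemma forestPotential_sub_comm (G : SimpleGraph W) (x y u v : W) :
    forestPotential G x y u - forestPotential G x y v =
      forestPotential G v u y - forestPotential G v u x := by
  classical
  rw [forestPotential_sub, forestPotential_sub, filter_separatingForests_comm G x y u v,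
    filter_separatingForests_comm G x y v u, separatingForests_comm G u v]
  simp only [and_comm]

open scoped Classical in
lemma forestPotential_of_adj (huv : G.Adj u v) (w : W) :
    forestPotential G v u w = #{T ∈ spanningTrees G |
      s(u, v) ∈ T ∧ (edgeGraph (T.erase s(u, v))).Reachable v w} := by
  rw [forestPotential, separatingForests_comm, card_filter_separatingForests huv]

open scoped Classical in
lemma IsSpanningTree.card_filter_reachable_erase [DecidableRel G.Adj] {T : Finset (Sym2 W)}
    {w : W} (hT : IsSpanningTree G T) (hwu : w ≠ u) :
    #{v ∈ G.neighborFinset u |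
      s(u, v) ∈ T ∧ (edgeGraph (T.erase s(u, v))).Reachable v w} = 1 := by
  rw [card_eq_one_iff_existsUnique]
  refine (existsUnique_congr fun v => ?_).mp (existsUnique_adj_reachable_deleteEdges hT.2 hwu)
  have hadj : (edgeGraph T).Adj u v ↔ G.Adj u v ∧ s(u, v) ∈ T :=
    (fromEdgeSet_adj _).trans
      ⟨fun h => ⟨hT.1 h.1, h.1⟩, fun h => ⟨h.2, h.1.ne⟩⟩
  rw [mem_filter, mem_neighborFinset, edgeGraph_erase, ← and_assoc, ← hadj]

lemma sum_forestPotential_neighborFinset [DecidableRel G.Adj] {w : W} (hwu : w ≠ u) :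
    ∑ v ∈ G.neighborFinset u, forestPotential G v u w = #(spanningTrees G) := by
  classical
  let r (v : W) (T : Finset (Sym2 W)) : Prop :=
    s(u, v) ∈ T ∧ (edgeGraph (T.erase s(u, v))).Reachable v w
  calc ∑ v ∈ G.neighborFinset u, forestPotential G v u w
      = ∑ v ∈ G.neighborFinset u, (#{T ∈ spanningTrees G | r v T} : ℝ) :=
        sum_congr rfl fun v hv => forestPotential_of_adj ((mem_neighborFinset _ _ _).mp hv) w
    _ = ∑ T ∈ spanningTrees G, (#{v ∈ G.neighborFinset u | r v T} : ℝ) := by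
        exact_mod_cast sum_card_bipartiteAbove_eq_sum_card_bipartiteBelow r
    _ = ∑ _T ∈ spanningTrees G, (1 : ℝ) := sum_congr rfl fun _ hT => by
        rw [(mem_spanningTrees.mp hT).card_filter_reachable_erase hwu, Nat.cast_one]
    _ = #(spanningTrees G) := by simp

lemma lapMatrix_mulVec_forestPotential [DecidableEq W] (G : SimpleGraph W) [DecidableRel G.Adj]
    (x y : W) :
    G.lapMatrix ℝ *ᵥ forestPotential G x y =
      (#(spanningTrees G) : ℝ) • (Pi.single x 1 - Pi.single y 1) := by
  have hsum (u w : W) : ∑ v ∈ G.neighborFinset u, forestPotential G v u w =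
      #(spanningTrees G) * (1 - (Pi.single w 1 : W → ℝ) u) := by
    obtain rfl | hwu := eq_or_ne w u
    · simp [forestPotential_right]
    · simp [sum_forestPotential_neighborFinset hwu, hwu.symm]
  ext u
  simp only [lapMatrix_mulVec_apply_eq_sum_sub, forestPotential_sub_comm G x y,
    sum_sub_distrib, hsum, Pi.smul_apply, Pi.sub_apply, smul_eq_mul]
  ring

theorem kirchhoff_formula_general (hG : G.Connected) {x y : W} (hxy : x ≠ y) :
    (#(separatingForests G x y) : ℝ) = effRes G x y * #(spanningTrees G) := by
  classical
  have hcard : (#(spanningTrees G) : ℝ) ≠ 0 := by simp [(spanningTrees_nonempty hG).ne_empty]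
  have hlap : G.lapMatrix ℝ *ᵥ ((#(spanningTrees G) : ℝ)⁻¹ • forestPotential G x y) =
      Pi.single x 1 - Pi.single y 1 := by
    rw [mulVec_smul, lapMatrix_mulVec_forestPotential, inv_smul_smul₀ hcard]
  have hres : effRes G x y = (#(spanningTrees G) : ℝ)⁻¹ * #(separatingForests G x y) := by
    rw [effRes_eq_sub_of_lapMatrix_mulVec hxy hlap, Pi.smul_apply, Pi.smul_apply,
      forestPotential_left, forestPotential_right, smul_zero, sub_zero, smul_eq_mul]
  rw [hres, mul_comm, mul_inv_cancel_left₀ hcard]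

end Counting

open scoped Classical in
/-- **Kirchhoff's effective-resistance formula**: the number of spanning trees
containing the edge `{x,y}` equals `R_eff(x ↔ y)` times the total number of
spanning trees; equivalently, a uniform spanning tree contains `{x,y}` with
probability `R_eff(x ↔ y)`. -/
theorem kirchhoff_formula (G : SimpleGraph V) (hG : G.Connected)
    (x y : V) (hxy : G.Adj x y) :
    ((Finset.univ.filter
        (fun T : Finset (Sym2 V) => IsSpanningTree G T ∧ s(x, y) ∈ T)).card : ℝ) =
      effRes G x y *
        ((Finset.univ.filter
          (fun T : Finset (Sym2 V) => IsSpanningTree G T)).card : ℝ) := by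
  have htrees : univ.filter (IsSpanningTree G) = spanningTrees G := by
    ext T
    simp [mem_spanningTrees]
  rw [← filter_filter, htrees, ← card_separatingForests hxy, kirchhoff_formula_general hG hxy.ne]
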